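/- arXiv:0904.1081 — 4 statements merged into one kernel-verified Lean document; each statement's English description precedes it below -/
import Mathlib

section
/- Let A be a unital simple C*-algebra with a unique tracial state τ. Then the fundamental group F(A) is a multiplicative subgroup of the positive reals: every element of F(A) is strictly positive, 1 ∈ F(A), F(A) is closed under multiplication, and F(A) is closed under taking inverses. -/
open scoped Matrix ComplexOrder

section CommonDefs

variable (A : Type*) [CStarAlgebra A]

/-- `τ` is a tracial state on the unital C*-algebra `A`. -/
structure IsTracialState (τ : A →ₗ[ℂ] ℂ) : Prop where
  map_one : τ 1 = 1
  nonneg : ∀ a : A, 0 ≤ τ (star a * a)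
  tracial : ∀ a b : A, τ (a * b) = τ (b * a)

/-- `A` is simple: every closed two-sided ideal is trivial. -/
def IsSimpleCStarAlgebra : Prop :=
  ∀ I : TwoSidedIdeal A, IsClosed (I : Set A) → I = ⊥ ∨ I = ⊤

/-- `φ` is a *-isomorphism from `A` onto the corner `p Mₙ(A) p`. -/
def IsCornerIso {n : ℕ} (p : Matrix (Fin n) (Fin n) A)
    (φ : A → Matrix (Fin n) (Fin n) A) : Prop :=
  Function.Injective φ ∧
  (∀ a b : A, φ (a + b) = φ a + φ b) ∧
  (∀ a b : A, φ (a * b) = φ a * φ b) ∧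
  (∀ (c : ℂ) (a : A), φ (c • a) = c • φ a) ∧
  (∀ a : A, φ (star a) = star (φ a)) ∧
  Set.range φ = {x : Matrix (Fin n) (Fin n) A | p * x * p = x}

/-- The fundamental group of a unital simple C*-algebra with unique tracial state `τ`:
the set of values `(τ ⊗ Tr)(p)` over projections `p ∈ Mₙ(A)` whose corner `p Mₙ(A) p`
is *-isomorphic to `A`. -/
def fundamentalGroup (τ : A →ₗ[ℂ] ℂ) : Set ℝ :=
  {t : ℝ | ∃ (n : ℕ) (p : Matrix (Fin n) (Fin n) A), 0 < n ∧
    p * p = p ∧ star p = p ∧ (∃ φ, IsCornerIso A p φ) ∧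
    (∑ i, τ (p i i)) = (t : ℂ)}

end CommonDefs

namespace FG

/-- corner isomorphism over an arbitrary finite index type -/
def CI {A : Type*} [CStarAlgebra A] {ι : Type*} [Fintype ι] (p : Matrix ι ι A)
    (φ : A → Matrix ι ι A) : Prop :=
  Function.Injective φ ∧
  (∀ a b : A, φ (a + b) = φ a + φ b) ∧
  (∀ a b : A, φ (a * b) = φ a * φ b) ∧
  (∀ (c : ℂ) (a : A), φ (c • a) = c • φ a) ∧
  (∀ a : A, φ (star a) = star (φ a)) ∧
  Set.range φ = {x : Matrix ι ι A | p * x * p = x}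

variable {A : Type*} [CStarAlgebra A]

theorem CI.zero {ι : Type*} [Fintype ι] {p : Matrix ι ι A} {φ : A → Matrix ι ι A}
    (h : CI p φ) : φ 0 = 0 := by
  have := h.2.1 0 0
  simpa using this

theorem CI.sum {ι : Type*} [Fintype ι] {p : Matrix ι ι A} {φ : A → Matrix ι ι A}
    (h : CI p φ) {κ : Type*} (s : Finset κ) (g : κ → A) : φ (∑ i ∈ s, g i) = ∑ i ∈ s, φ (g i) := by
  let f : A →+ Matrix ι ι A := ⟨⟨φ, h.zero⟩, h.2.1⟩
  exact map_sum f g s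

theorem CI.corner {ι : Type*} [Fintype ι] {p : Matrix ι ι A} {φ : A → Matrix ι ι A}
    (h : CI p φ) (a : A) : p * φ a * p = φ a := by
  have : φ a ∈ Set.range φ := ⟨a, rfl⟩
  rw [h.2.2.2.2.2] at this
  exact this

theorem CI.exists {ι : Type*} [Fintype ι] {p : Matrix ι ι A} {φ : A → Matrix ι ι A}
    (h : CI p φ) (x : Matrix ι ι A) (hx : p * x * p = x) : ∃ a, φ a = x := by
  have : x ∈ Set.range φ := by
    rw [h.2.2.2.2.2]
    exact hx
  exact this

theorem CI.one {ι : Type*} [Fintype ι] {p : Matrix ι ι A} {φ : A → Matrix ι ι A}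
    (h : CI p φ) (hp : p * p = p) : φ 1 = p := by
  obtain ⟨e, he⟩ := h.exists p (by rw [hp, hp])
  have h1 : p * φ 1 = p := by
    rw [← he, ← h.2.2.1, mul_one]
  have h2 := h.corner 1
  rw [h1, hp] at h2
  exact h2.symm

theorem mem_of {ι : Type*} [Fintype ι] [Nontrivial A] (τ : A →ₗ[ℂ] ℂ) (t : ℝ) (p : Matrix ι ι A)
    (hp : p * p = p) (hs : star p = p) (φ : A → Matrix ι ι A) (h : CI p φ)
    (ht : ∑ i, τ (p i i) = (t : ℂ)) : t ∈ fundamentalGroup A τ := by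
  classical
  let e := Fintype.equivFin ι
  have hn : Nonempty ι := by
    by_contra hne
    rw [not_nonempty_iff] at hne
    exact zero_ne_one (h.1 (Subsingleton.elim (φ 0) (φ 1)))
  have hm : ∀ x y : Matrix ι ι A, (x * y).submatrix e.symm e.symm
      = x.submatrix e.symm e.symm * y.submatrix e.symm e.symm :=
    fun x y => (Matrix.submatrix_mul_equiv x y _ _ _).symm
  have hinj : Function.Injective (fun x : Matrix ι ι A => x.submatrix e.symm e.symm) :=
    (Matrix.reindex e e).injective
  refine ⟨Fintype.card ι, p.submatrix e.symm e.symm, Fintype.card_pos, ?_, ?_,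
    ⟨fun a => (φ a).submatrix e.symm e.symm, ?_, ?_, ?_, ?_, ?_, ?_⟩, ?_⟩
  · rw [← hm, hp]
  · conv_rhs => rw [← hs]
    rfl
  · exact hinj.comp h.1
  · intro a b
    simp only [h.2.1]
    rfl
  · intro a b
    simp only [h.2.2.1, hm]
  · intro a b
    simp only [h.2.2.2.1]
    rfl
  · intro a
    simp only [h.2.2.2.2.1]
    rfl
  · ext x
    constructor
    · rintro ⟨a, rfl⟩
      simp only [Set.mem_ofPred_eq]
      rw [← hm, ← hm, h.corner]
    · intro hx
      simp only [Set.mem_ofPred_eq] at hx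
      have hxe : x = (x.submatrix e e).submatrix e.symm e.symm := by
        ext i j
        simp
      rw [hxe, ← hm, ← hm] at hx
      obtain ⟨a, ha⟩ := h.exists _ (hinj hx)
      refine ⟨a, ?_⟩
      simp only [ha]
      exact hxe.symm
  · rw [← ht]
    exact Equiv.sum_comp e.symm (fun i => τ (p i i))

theorem tr_comm {τ : A →ₗ[ℂ] ℂ} (hτ : IsTracialState A τ) {ι κ : Type*} [Fintype ι] [Fintype κ]
    (X : Matrix ι κ A) (Y : Matrix κ ι A) :
    ∑ i, τ ((X * Y) i i) = ∑ j, τ ((Y * X) j j) := by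
  simp only [Matrix.mul_apply, map_sum]
  rw [Finset.sum_comm]
  simp only [hτ.tracial]

theorem trH_nonneg {τ : A →ₗ[ℂ] ℂ} (hτ : IsTracialState A τ) {ι κ : Type*} [Fintype ι] [Fintype κ]
    (X : Matrix κ ι A) : 0 ≤ ∑ i, τ ((Xᴴ * X) i i) := by
  simp only [Matrix.mul_apply, map_sum, Matrix.conjTranspose_apply]
  exact Finset.sum_nonneg fun i _ => Finset.sum_nonneg fun j _ => hτ.nonneg _

/-- trace composed with `φ` -/
noncomputable def trφ (τ : A →ₗ[ℂ] ℂ) {ι : Type*} [Fintype ι] {p : Matrix ι ι A}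
    {φ : A → Matrix ι ι A} (h : CI p φ) : A →ₗ[ℂ] ℂ where
  toFun a := ∑ i, τ (φ a i i)
  map_add' a b := by simp [h.2.1, Finset.sum_add_distrib]
  map_smul' c a := by simp [h.2.2.2.1, Finset.mul_sum]

theorem cs (f : A →ₗ[ℂ] ℂ) (hf : ∀ a, 0 ≤ f (star a * a)) (h1 : f 1 = 0) (b : A) : f b = 0 := by
  have key : ∀ l : ℂ, 0 ≤ (starRingEnd ℂ l) * f (star b) + l * f b
      + (starRingEnd ℂ l * l) * f (star b * b) := by
    intro l
    have := hf (1 + l • b)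
    simp only [star_add, star_one, star_smul, add_mul, mul_add, one_mul, mul_one, map_add, h1,
      smul_mul_assoc, mul_smul_comm, map_smul, smul_eq_mul, zero_add] at this
    convert this using 1
    simp
    ring
  have hB := hf b
  set B := f (star b * b)
  set u := f (star b)
  set w := f b
  rw [Complex.le_def] at hB
  obtain ⟨hB1, hB2⟩ := hB
  have q : ∀ c d : ℝ, (∀ x : ℝ, 0 ≤ x * c + x ^ 2 * d) → c = 0 := by
    intro c d hx
    by_contra hc
    have hd : 0 < 1 + |d| := by positivity
    have := hx (-c / (1 + |d|))
    have e : (-c / (1 + |d|)) * c + (-c / (1 + |d|)) ^ 2 * d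
        = (c ^ 2 / (1 + |d|) ^ 2) * (d - (1 + |d|)) := by
      field_simp
      ring
    rw [e] at this
    have h2 : 0 < c ^ 2 / (1 + |d|) ^ 2 := by positivity
    have h3 := le_abs_self d
    nlinarith
  have r1 := q (u.re + w.re) B.re (fun x => by
    have := (Complex.le_def.1 (key x)).1
    simp at this
    nlinarith)
  have r2 := q (u.im - w.im) B.re (fun x => by
    have := (Complex.le_def.1 (key (x * Complex.I))).1
    simp at this
    nlinarith)
  have i1 := (Complex.le_def.1 (key 1)).2
  have i2 := (Complex.le_def.1 (key Complex.I)).2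
  simp at i1 i2 hB2
  rw [← hB2] at i1 i2
  apply Complex.ext <;> simp <;> linarith

theorem alg_simple (hA : IsSimpleCStarAlgebra A) (I : TwoSidedIdeal A) (x : A) (hx : x ∈ I)
    (hx0 : x ≠ 0) : (1 : A) ∈ I := by
  let J : TwoSidedIdeal A := TwoSidedIdeal.mk' (closure (I : Set A))
    (subset_closure I.zero_mem)
    (fun {x y} hx hy => map_mem_closure₂ continuous_add hx hy (fun a ha b hb => I.add_mem ha hb))
    (fun {x} hx => map_mem_closure continuous_neg hx (fun a ha => I.neg_mem ha))
    (fun {x y} hy => map_mem_closure (continuous_const_mul x) hy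
      (fun a ha => I.mul_mem_left x a ha))
    (fun {x y} hx => map_mem_closure (f := fun z => z * y) (continuous_mul_const y) hx
      (fun a ha => I.mul_mem_right a y ha))
  have hJ : (J : Set A) = closure (I : Set A) := TwoSidedIdeal.coe_mk' _ _ _ _ _ _
  rcases hA J (by rw [hJ]; exact isClosed_closure) with h | h
  · exfalso
    apply hx0
    have : x ∈ (J : Set A) := by rw [hJ]; exact subset_closure hx
    rw [h] at this
    simpa using this
  · have h1 : (1 : A) ∈ (J : Set A) := by rw [h]; trivial
    rw [hJ, Metric.mem_closure_iff] at h1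
    obtain ⟨z, hz, hd⟩ := h1 1 one_pos
    rw [dist_eq_norm] at hd
    have hu := isUnit_one_sub_of_norm_lt_one hd
    rw [sub_sub_cancel] at hu
    obtain ⟨u, rfl⟩ := hu
    have := I.mul_mem_left (↑u⁻¹) _ hz
    simpa using this

/-- one by one matrix -/
def c (a : A) : Matrix Unit Unit A := Matrix.of fun _ _ => a

theorem c_mul (a b : A) : c (a * b) = c a * c b := by
  ext; simp [c, Matrix.mul_apply]

theorem c_star (a : A) : (c a)ᴴ = c (star a) := by
  ext; simp [c]

theorem c_one : c (1 : A) = 1 := by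
  ext; simp [c]

theorem c_add (a b : A) : c (a + b) = c a + c b := by
  ext; simp [c]

theorem c_smul (l : ℂ) (a : A) : c (l • a) = l • c a := by
  ext; simp [c]

theorem c_inj {a b : A} (h : c a = c b) : a = b := congrFun (congrFun h ()) ()

theorem c_eta (x : Matrix Unit Unit A) : c (x () ()) = x := rfl

theorem exists_xy (hA : IsSimpleCStarAlgebra A) {n : ℕ} (p : Matrix (Fin n) (Fin n) A)
    (hp : p * p = p) (hs : star p = p) (hp0 : p ≠ 0) :
    ∃ (κ : Type) (_ : Fintype κ) (x y : κ → Matrix (Fin n) Unit A),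
      (∀ i, p * x i = x i) ∧ (∀ i, p * y i = y i) ∧ ∑ i, (x i)ᴴ * y i = c 1 := by
  let S : Set A := {a | ∃ (κ : Type) (_ : Fintype κ) (x y : κ → Matrix (Fin n) Unit A),
      (∀ i, p * x i = x i) ∧ (∀ i, p * y i = y i) ∧ ∑ i, (x i)ᴴ * y i = c a}
  let I : TwoSidedIdeal A := TwoSidedIdeal.mk' S
    (by
      refine ⟨Empty, inferInstance, Empty.elim, Empty.elim, by simp, by simp, ?_⟩
      ext; simp [c])
    (by
      rintro a b ⟨κ, _, x, y, hx, hy, h⟩ ⟨κ', _, x', y', hx', hy', h'⟩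
      refine ⟨κ ⊕ κ', inferInstance, Sum.elim x x', Sum.elim y y', ?_, ?_, ?_⟩
      · rintro (i | i) <;> simp [hx, hx']
      · rintro (i | i) <;> simp [hy, hy']
      · simp [h, h', c_add])
    (by
      rintro a ⟨κ, _, x, y, hx, hy, h⟩
      refine ⟨κ, inferInstance, x, fun i => - y i, hx, fun i => by simp [hy], ?_⟩
      simp only [Matrix.mul_neg, Finset.sum_neg_distrib, h]
      rfl)
    (by
      rintro b a ⟨κ, _, x, y, hx, hy, h⟩
      refine ⟨κ, inferInstance, fun i => x i * c (star b), y, fun i => by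
        rw [← Matrix.mul_assoc, hx], hy, ?_⟩
      simp only [Matrix.conjTranspose_mul, c_star, star_star, Matrix.mul_assoc, ← Matrix.mul_sum,
        h, c_mul])
    (by
      rintro a b ⟨κ, _, x, y, hx, hy, h⟩
      refine ⟨κ, inferInstance, x, fun i => y i * c b, hx, fun i => by
        rw [← Matrix.mul_assoc, hy], ?_⟩
      simp only [← Matrix.mul_assoc, ← Matrix.sum_mul, h, c_mul])
  have hI : ∀ a, a ∈ I ↔ a ∈ S := fun a => TwoSidedIdeal.mem_mk' _ _ _ _ _ _ _
  obtain ⟨k, l, hkl⟩ : ∃ k l, p k l ≠ 0 := by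
    by_contra! hc
    exact hp0 (by ext k l; simp [hc])
  refine (hI 1).1 (alg_simple hA I (p k l) ((hI _).2 ?_) hkl)
  let e : Fin n → Matrix (Fin n) Unit A := fun k => Matrix.of fun i _ => p i k
  have he : ∀ k, p * e k = e k := by
    intro k
    ext i j
    conv_rhs => simp only [e, Matrix.of_apply]; rw [← hp]
    simp [Matrix.mul_apply, e]
  refine ⟨Unit, inferInstance, fun _ => e k, fun _ => e l, fun _ => he k, fun _ => he l, ?_⟩
  ext
  simp only [Finset.univ_unique, Finset.sum_const, Finset.card_singleton, one_smul,
    Matrix.mul_apply, Matrix.conjTranspose_apply, e, Matrix.of_apply, c]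
  conv_rhs => rw [← hp, Matrix.mul_apply]
  refine Finset.sum_congr rfl fun i _ => ?_
  have : star (p i k) = p k i := congrFun (congrFun hs k) i
  rw [this]

theorem exists_cols (hA : IsSimpleCStarAlgebra A) {n : ℕ} (p : Matrix (Fin n) (Fin n) A)
    (hp : p * p = p) (hs : star p = p) (hp0 : p ≠ 0) :
    ∃ (κ : Type) (_ : Fintype κ) (v : κ → Matrix (Fin n) Unit A),
      (∀ i, p * v i = v i) ∧ ∑ i, (v i)ᴴ * v i = 1 := by
  obtain ⟨κ, _, x, y, hx, hy, h⟩ := exists_xy hA p hp hs hp0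
  let _ := CStarAlgebra.spectralOrder A
  have := CStarAlgebra.spectralOrderedRing A
  have h' : ∑ i, (y i)ᴴ * x i = c 1 := by
    have := congrArg Matrix.conjTranspose h
    simpa [Matrix.conjTranspose_sum, c_star] using this
  let z : κ ⊕ κ → Matrix (Fin n) Unit A := Sum.elim x y
  have hz : ∀ i, p * z i = z i := by rintro (i | i) <;> simp [z, hx, hy]
  let H := ∑ i, (z i)ᴴ * z i
  let d : A := (∑ i, (x i - y i)ᴴ * (x i - y i)) () ()
  have hd : 0 ≤ d := by
    simp only [d, Matrix.sum_apply, Matrix.mul_apply, Matrix.conjTranspose_apply]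
    exact Finset.sum_nonneg fun i _ => Finset.sum_nonneg fun j _ => star_mul_self_nonneg _
  have hH : H = c (d + 1 + 1) := by
    rw [c_add, c_add]
    simp only [d, c_eta, H, z, Fintype.sum_sum_type, Sum.elim_inl, Sum.elim_inr]
    simp only [Matrix.conjTranspose_sub, Matrix.mul_sub, Matrix.sub_mul, Finset.sum_sub_distrib,
      h, h']
    abel
  have h01 : (0 : A) ≤ 1 := by simp
  have hle : (1 : A) ≤ d + 1 + 1 := by
    have := add_nonneg hd h01
    exact le_add_of_nonneg_left this
  have hpos : IsStrictlyPositive (d + 1 + 1) :=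
    ⟨h01.trans hle, CStarAlgebra.isUnit_of_le (1 : A) hle⟩
  have hr := CFC.conjugate_rpow_neg_one_half (d + 1 + 1) hpos
  set r : A := (d + 1 + 1) ^ (-(1 / 2) : ℝ) with hrdef
  have hrs : star r = r := (IsSelfAdjoint.of_nonneg (CFC.rpow_nonneg)).star_eq
  refine ⟨κ ⊕ κ, inferInstance, fun i => z i * c r, fun i => by rw [← Matrix.mul_assoc, hz], ?_⟩
  have : ∀ i, (z i * c r)ᴴ * (z i * c r) = c r * (((z i)ᴴ * z i) * c r) := by
    intro i
    rw [Matrix.conjTranspose_mul, c_star, hrs]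
    simp only [Matrix.mul_assoc]
  simp only [this, ← Matrix.mul_sum, ← Matrix.sum_mul]
  change c r * (H * c r) = 1
  rw [hH, ← c_mul, ← c_mul, ← c_one, ← mul_assoc, hr]

theorem CI.left {ι : Type*} [Fintype ι] {p : Matrix ι ι A} {φ : A → Matrix ι ι A}
    (h : CI p φ) (hp : p * p = p) (a : A) : p * φ a = φ a := by
  rw [← h.one hp, ← h.2.2.1, one_mul]

theorem CI.right {ι : Type*} [Fintype ι] {p : Matrix ι ι A} {φ : A → Matrix ι ι A}
    (h : CI p φ) (hp : p * p = p) (a : A) : φ a * p = φ a := by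
  rw [← h.one hp, ← h.2.2.1, mul_one]

theorem trφ_nonneg {τ : A →ₗ[ℂ] ℂ} (hτ : IsTracialState A τ) {ι : Type*} [Fintype ι]
    {p : Matrix ι ι A} {φ : A → Matrix ι ι A} (h : CI p φ) (a : A) : 0 ≤ trφ τ h (star a * a) := by
  change 0 ≤ ∑ i, τ (φ (star a * a) i i)
  rw [h.2.2.1, h.2.2.2.2.1]
  exact trH_nonneg hτ (φ a)

theorem CI.ne_zero [Nontrivial A] {ι : Type*} [Fintype ι] {p : Matrix ι ι A}
    {φ : A → Matrix ι ι A} (h : CI p φ) (hp : p * p = p) : p ≠ 0 := by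
  intro h0
  have := h.one hp
  rw [h0, ← h.zero] at this
  exact one_ne_zero (h.1 this)

theorem cols_trace {τ : A →ₗ[ℂ] ℂ} (hτ : IsTracialState A τ) {κ : Type} [Fintype κ] {n : ℕ}
    (v : κ → Matrix (Fin n) Unit A) (hv : ∑ i, (v i)ᴴ * v i = 1) :
    ∑ i, ∑ k, τ ((v i * (v i)ᴴ) k k) = 1 := by
  simp only [tr_comm hτ (v _) (v _)ᴴ]
  have : τ ((∑ i, (v i)ᴴ * v i) () ()) = 1 := by rw [hv]; simpa using hτ.map_one
  rw [← this, Matrix.sum_apply, map_sum]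
  simp

theorem pos (hA : IsSimpleCStarAlgebra A) [Nontrivial A] {τ : A →ₗ[ℂ] ℂ}
    (hτ : IsTracialState A τ) {n : ℕ} {p : Matrix (Fin n) (Fin n) A}
    (hp : p * p = p) (hs : star p = p)
    {φ : A → Matrix (Fin n) (Fin n) A} (h : CI p φ) (t : ℝ) (ht : ∑ i, τ (p i i) = (t : ℂ)) :
    0 < t := by
  have h1 : trφ τ h 1 = t := by
    change ∑ i, τ (φ 1 i i) = _
    rw [h.one hp, ht]
  have h0 : 0 ≤ t := by
    have := trφ_nonneg hτ h 1
    rw [star_one, mul_one, h1] at this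
    exact_mod_cast this
  rcases h0.lt_or_eq with h0 | h0
  · exact h0
  exfalso
  rw [← h0] at h1
  have hz := cs (trφ τ h) (trφ_nonneg hτ h) (by simpa using h1)
  obtain ⟨κ, _, v, hpv, hv⟩ := exists_cols hA p hp hs (h.ne_zero hp)
  have h2 := cols_trace hτ v hv
  have : ∀ i, ∑ k, τ ((v i * (v i)ᴴ) k k) = 0 := by
    intro i
    have hvp : (v i)ᴴ * p = (v i)ᴴ := by
      have := congrArg Matrix.conjTranspose (hpv i)
      rw [Matrix.conjTranspose_mul] at this
      rw [← Matrix.star_eq_conjTranspose p, hs] at this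
      exact this
    obtain ⟨a, ha⟩ := h.exists (v i * (v i)ᴴ) (by
      rw [← Matrix.mul_assoc, hpv, Matrix.mul_assoc, hvp])
    rw [← ha]
    exact hz a
  simp [this] at h2

theorem scale {τ : A →ₗ[ℂ] ℂ} (hτ : IsTracialState A τ)
    (huniq : ∀ σ : A →ₗ[ℂ] ℂ, IsTracialState A σ → σ = τ)
    {ι : Type*} [Fintype ι] {p : Matrix ι ι A} (hp : p * p = p)
    {φ : A → Matrix ι ι A} (h : CI p φ) (t : ℝ) (ht : ∑ i, τ (p i i) = (t : ℂ)) (h0 : 0 < t)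
    (a : A) : ∑ i, τ (φ a i i) = t * τ a := by
  have h1 : trφ τ h 1 = t := by
    change ∑ i, τ (φ 1 i i) = _
    rw [h.one hp, ht]
  have htc : (t : ℂ) ≠ 0 := by exact_mod_cast h0.ne'
  have hσ := huniq ((t : ℂ)⁻¹ • trφ τ h) ⟨by simp [h1, htc], fun a => by
    have hti : (0 : ℂ) ≤ (t : ℂ)⁻¹ := by
      rw [← Complex.ofReal_inv]
      exact_mod_cast (inv_pos.2 h0).le
    exact mul_nonneg hti (trφ_nonneg hτ h a), fun a b => by
    simp only [LinearMap.smul_apply]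
    congr 1
    change ∑ i, τ (φ (a * b) i i) = ∑ i, τ (φ (b * a) i i)
    rw [h.2.2.1, h.2.2.1, tr_comm hτ]⟩
  have := congrArg (fun f : A →ₗ[ℂ] ℂ => f a) hσ
  simp only [LinearMap.smul_apply, smul_eq_mul] at this
  rw [← this, mul_inv_cancel_left₀ htc]
  rfl

/-- blocks of a matrix -/
def blk {μ ν : Type*} (X : Matrix (μ × ν) (μ × ν) A) (i j : μ) : Matrix ν ν A :=
  Matrix.of fun k l => X (i, k) (j, l)

theorem blk_mul {μ ν : Type*} [Fintype μ] [Fintype ν] (X Y : Matrix (μ × ν) (μ × ν) A) (i j : μ) :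
    blk (X * Y) i j = ∑ a, blk X i a * blk Y a j := by
  ext k l
  simp [blk, Matrix.mul_apply, Matrix.sum_apply, Fintype.sum_prod_type]

theorem blk_ext {μ ν : Type*} {X Y : Matrix (μ × ν) (μ × ν) A}
    (h : ∀ i j, blk X i j = blk Y i j) : X = Y := by
  ext ⟨i, k⟩ ⟨j, l⟩
  exact congrFun (congrFun (h i j) k) l

/-- amplification -/
def amp {μ ν : Type*} (φ : A → Matrix ν ν A) (y : Matrix μ μ A) : Matrix (μ × ν) (μ × ν) A :=
  Matrix.of fun i j => φ (y i.1 j.1) i.2 j.2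

theorem blk_amp {μ ν : Type*} (φ : A → Matrix ν ν A) (y : Matrix μ μ A) (i j : μ) :
    blk (amp φ y) i j = φ (y i j) := rfl

theorem amp_mul {μ ν : Type*} [Fintype μ] [Fintype ν] {p : Matrix ν ν A} {φ : A → Matrix ν ν A}
    (h : CI p φ) (x y : Matrix μ μ A) : amp φ (x * y) = amp φ x * amp φ y := by
  apply blk_ext
  intro i j
  simp only [blk_mul, blk_amp, Matrix.mul_apply, h.sum, h.2.2.1]

theorem amp_star {μ ν : Type*} [Fintype μ] [Fintype ν] {p : Matrix ν ν A} {φ : A → Matrix ν ν A}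
    (h : CI p φ) (x : Matrix μ μ A) : amp φ (star x) = star (amp φ x) := by
  apply blk_ext
  intro i j
  rw [blk_amp, Matrix.star_apply, h.2.2.2.2.1]
  rfl

theorem amp_inj {μ ν : Type*} [Fintype ν] {p : Matrix ν ν A} {φ : A → Matrix ν ν A}
    (h : CI p φ) : Function.Injective (amp (μ := μ) φ) := by
  intro x y hxy
  ext i j
  apply h.1
  rw [← blk_amp φ x, hxy, blk_amp]

theorem amp_CI {μ ν : Type*} [Fintype μ] [Fintype ν] {p : Matrix ν ν A} {φ : A → Matrix ν ν A}
    (h : CI p φ) (hp : p * p = p) {q : Matrix μ μ A} {ψ : A → Matrix μ μ A} (g : CI q ψ) :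
    CI (amp φ q) (fun a => amp φ (ψ a)) := by
  refine ⟨(amp_inj h).comp g.1, ?_, ?_, ?_, ?_, ?_⟩
  · intro a b
    apply blk_ext
    intro i j
    rw [blk_amp, g.2.1, Matrix.add_apply, h.2.1]
    rfl
  · intro a b
    simp only [g.2.2.1, amp_mul h]
  · intro l a
    apply blk_ext
    intro i j
    rw [blk_amp, g.2.2.2.1, Matrix.smul_apply, h.2.2.2.1]
    rfl
  · intro a
    simp only [g.2.2.2.2.1, amp_star h]
  · ext X
    simp only [Set.mem_range, Set.mem_ofPred_eq]
    constructor
    · rintro ⟨a, rfl⟩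
      rw [← amp_mul h, ← amp_mul h, g.corner]
    · intro hX
      have hb : ∀ i j, ∃ a, φ a = blk X i j := by
        intro i j
        apply h.exists
        rw [← hX]
        simp only [blk_mul, blk_amp]
        simp only [Matrix.mul_sum, Matrix.sum_mul]
        simp only [← mul_assoc, h.left hp]
        simp only [mul_assoc, h.right hp]
      choose y hy using hb
      have hXy : X = amp φ (Matrix.of y) := blk_ext fun i j => by rw [blk_amp, ← hy]; rfl
      rw [hXy, ← amp_mul h, ← amp_mul h] at hX
      obtain ⟨a, ha⟩ := g.exists _ (amp_inj h hX)
      exact ⟨a, by rw [ha, hXy]⟩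

theorem inv_mem (hA : IsSimpleCStarAlgebra A) [Nontrivial A] {τ : A →ₗ[ℂ] ℂ}
    (hτ : IsTracialState A τ)
    (huniq : ∀ σ : A →ₗ[ℂ] ℂ, IsTracialState A σ → σ = τ) {n : ℕ} {p : Matrix (Fin n) (Fin n) A}
    (hp : p * p = p) (hs : star p = p)
    {φ : A → Matrix (Fin n) (Fin n) A} (h : CI p φ) (t : ℝ) (ht : ∑ i, τ (p i i) = (t : ℂ)) :
    t⁻¹ ∈ fundamentalGroup A τ := by
  have t0 := pos hA hτ hp hs h t ht
  have htc : (t : ℂ) ≠ 0 := by exact_mod_cast t0.ne'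
  have hsc := scale hτ huniq hp h t ht t0
  obtain ⟨κ, _, v, hpv, hv⟩ := exists_cols hA p hp hs (h.ne_zero hp)
  have h2 := cols_trace hτ v hv
  have hvp : ∀ i, (v i)ᴴ * p = (v i)ᴴ := by
    intro i
    have := congrArg Matrix.conjTranspose (hpv i)
    rw [Matrix.conjTranspose_mul] at this
    rw [← Matrix.star_eq_conjTranspose p, hs] at this
    exact this
  have hex : ∀ (a : A) (i j : κ), ∃ b, φ b = v i * c a * (v j)ᴴ := by
    intro a i j
    apply h.exists
    rw [← Matrix.mul_assoc, ← Matrix.mul_assoc, hpv, Matrix.mul_assoc, hvp]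
  choose y hy using hex
  have hinj : ∀ a b : A, (∀ i j, v i * c a * (v j)ᴴ = v i * c b * (v j)ᴴ) → a = b := by
    intro a b hab
    have key : ∀ a : A, ∑ i, ∑ j, (v i)ᴴ * (v i * c a * (v j)ᴴ) * v j = c a := by
      intro a
      have : ∀ i j, (v i)ᴴ * (v i * c a * (v j)ᴴ) * v j
          = ((v i)ᴴ * v i) * (c a * ((v j)ᴴ * v j)) := by
        intro i j
        simp only [Matrix.mul_assoc]
      simp only [this, ← Matrix.mul_sum, ← Matrix.sum_mul, hv, Matrix.mul_one, Matrix.one_mul]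
    apply c_inj
    rw [← key a, ← key b]
    simp only [hab]
  let ψ : A → Matrix κ κ A := fun a => Matrix.of (y a)
  have hψ : ∀ a i j, φ (ψ a i j) = v i * c a * (v j)ᴴ := hy
  have hmul : ∀ a b, ψ (a * b) = ψ a * ψ b := by
    intro a b
    ext i j
    apply h.1
    rw [Matrix.mul_apply, h.sum]
    simp only [h.2.2.1, hψ]
    have : ∀ k, v i * c a * (v k)ᴴ * (v k * c b * (v j)ᴴ)
        = v i * c a * (((v k)ᴴ * v k) * (c b * (v j)ᴴ)) := by
      intro k
      simp only [Matrix.mul_assoc]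
    simp only [this, ← Matrix.mul_sum, ← Matrix.sum_mul, hv, Matrix.one_mul]
    rw [c_mul]
    simp only [Matrix.mul_assoc]
  have hstar : ∀ a, ψ (star a) = star (ψ a) := by
    intro a
    ext i j
    apply h.1
    rw [Matrix.star_apply, h.2.2.2.2.1, hψ, hψ, Matrix.star_eq_conjTranspose]
    simp [Matrix.conjTranspose_mul, c_star, Matrix.mul_assoc]
  refine mem_of τ t⁻¹ (ψ 1) (by rw [← hmul, one_mul]) (by rw [← hstar, star_one]) ψ
    ⟨?_, ?_, hmul, ?_, hstar, ?_⟩ ?_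
  · intro a b hab
    apply hinj
    intro i j
    rw [← hψ, ← hψ, hab]
  · intro a b
    ext i j
    apply h.1
    rw [Matrix.add_apply, h.2.1, hψ, hψ, hψ, c_add, Matrix.mul_add, Matrix.add_mul]
  · intro l a
    ext i j
    apply h.1
    rw [Matrix.smul_apply, h.2.2.2.1, hψ, hψ, c_smul, Matrix.mul_smul, Matrix.smul_mul]
  · ext X
    simp only [Set.mem_range, Set.mem_ofPred_eq]
    constructor
    · rintro ⟨a, rfl⟩
      rw [← hmul, ← hmul, one_mul, mul_one]
    · intro hX
      refine ⟨(∑ l, ∑ k, (v k)ᴴ * φ (X k l) * v l) () (), ?_⟩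
      ext i j
      apply h.1
      rw [hψ, c_eta]
      conv_rhs => rw [← hX]
      simp only [Matrix.mul_apply (i := i), h.sum, h.2.2.1, hψ, c_one,
        Matrix.mul_one, Matrix.mul_sum, Matrix.sum_mul]
      simp only [Matrix.mul_assoc]
  · have e : ∀ i, τ (ψ 1 i i) = (t : ℂ)⁻¹ * ∑ k, τ ((v i * (v i)ᴴ) k k) := by
      intro i
      have := hsc (ψ 1 i i)
      rw [hψ, c_one, Matrix.mul_one] at this
      rw [this, inv_mul_cancel_left₀ htc]
    simp only [e, ← Finset.mul_sum, h2]
    simp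

end FG

/-- the fundamental group of a unital simple C*-algebra with a unique
tracial state is a multiplicative subgroup of the positive reals. -/
theorem fundamentalGroup_is_subgroup
    (A : Type*) [CStarAlgebra A]
    (hA : IsSimpleCStarAlgebra A)
    (τ : A →ₗ[ℂ] ℂ) (hτ : IsTracialState A τ)
    (huniq : ∀ σ : A →ₗ[ℂ] ℂ, IsTracialState A σ → σ = τ) :
    (∀ t ∈ fundamentalGroup A τ, 0 < t) ∧
    (1 : ℝ) ∈ fundamentalGroup A τ ∧
    (∀ s t : ℝ, s ∈ fundamentalGroup A τ → t ∈ fundamentalGroup A τ →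
      s * t ∈ fundamentalGroup A τ) ∧
    (∀ t ∈ fundamentalGroup A τ, t⁻¹ ∈ fundamentalGroup A τ) := by
  have hnt : Nontrivial A := by
    refine ⟨⟨1, 0, fun h => ?_⟩⟩
    have := hτ.map_one
    rw [h, map_zero] at this
    exact zero_ne_one this
  refine ⟨?_, ?_, ?_, ?_⟩
  · rintro t ⟨n, p, -, hp, hs, ⟨φ, h⟩, ht⟩
    exact FG.pos hA hτ hp hs (φ := φ) h t ht
  · refine FG.mem_of τ 1 (1 : Matrix Unit Unit A) (mul_one _) (star_one _) FG.c
      ⟨fun a b => FG.c_inj, FG.c_add, FG.c_mul, FG.c_smul, fun a => (FG.c_star a).symm, ?_⟩ ?_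
    · ext x
      simp only [Set.mem_range, Set.mem_ofPred_eq, one_mul, mul_one, iff_true]
      exact ⟨x () (), FG.c_eta x⟩
    · simpa using hτ.map_one
  · rintro s t ⟨n, p, -, hp, hs, ⟨φ, h⟩, hps⟩ ⟨m, q, -, hq, hqs, ⟨ψ, g⟩, hqt⟩
    have h' : FG.CI p φ := h
    have g' : FG.CI q ψ := g
    have s0 := FG.pos hA hτ hp hs h' s hps
    refine FG.mem_of τ (s * t) (FG.amp φ q) (by rw [← FG.amp_mul h', hq])
      (by rw [← FG.amp_star h', hqs]) _ (FG.amp_CI h' hp g') ?_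
    rw [Fintype.sum_prod_type]
    have := FG.scale hτ huniq hp h' s hps s0
    simp only [FG.amp, Matrix.of_apply, this, ← Finset.mul_sum, hqt]
    simp
  · rintro t ⟨n, p, -, hp, hs, ⟨φ, h⟩, ht⟩
    exact FG.inv_mem hA hτ huniq hp hs (φ := φ) h t ht
end

section
/- Let A be a separable unital simple C*-algebra with a unique tracial state τ. Then the fundamental group F(A) is a countable subset of ℝ. -/
open scoped Matrix ComplexOrder

section Helpers

lemma isOpen_units_matrix {A : Type*} [CStarAlgebra A] (n : ℕ) :
    IsOpen {z : Matrix (Fin n) (Fin n) A | IsUnit z} := by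
  let N : NormedRing (Matrix (Fin n) (Fin n) A) := Matrix.linftyOpNormedRing
  have hc : CompleteSpace (Matrix (Fin n) (Fin n) A) := inferInstance
  have hN : @CompleteSpace (Matrix (Fin n) (Fin n) A)
    N.toMetricSpace.toPseudoMetricSpace.toUniformSpace := hc
  exact @Units.isOpen (Matrix (Fin n) (Fin n) A) N
    (@instHasSummableGeomSeriesOfCompleteSpace _ N hN)

lemma trace_cyclic_aux {A : Type*} [CStarAlgebra A] (τ : A →ₗ[ℂ] ℂ)
    (hτ : IsTracialState A τ) {n : ℕ} (x y : Matrix (Fin n) (Fin n) A) :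
    ∑ i, τ ((x * y) i i) = ∑ i, τ ((y * x) i i) := by
  simp only [Matrix.mul_apply, map_sum]
  rw [Finset.sum_comm]
  exact Finset.sum_congr rfl fun i _ => Finset.sum_congr rfl fun j _ => hτ.tracial _ _

lemma idem_traces_countable {A : Type*} [CStarAlgebra A] [TopologicalSpace.SeparableSpace A]
    (τ : A →ₗ[ℂ] ℂ) (hτ : IsTracialState A τ) (n : ℕ) :
    (Set.range fun p : {p : Matrix (Fin n) (Fin n) A // p * p = p} =>
      ∑ i, τ (p.1 i i)).Countable := by
  have : SecondCountableTopology A := UniformSpace.secondCountable_of_separable A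
  have : SecondCountableTopology (Matrix (Fin n) (Fin n) A) :=
    inferInstanceAs (SecondCountableTopology (Fin n → Fin n → A))
  let X := {p : Matrix (Fin n) (Fin n) A // p * p = p}
  have : SecondCountableTopology X :=
    TopologicalSpace.Subtype.secondCountableTopology
      {p : Matrix (Fin n) (Fin n) A | p * p = p}
  let T : X → ℂ := fun p => ∑ i, τ (p.1 i i)
  have hloc : IsLocallyConstant T := by
    rw [IsLocallyConstant.iff_exists_open]
    intro p
    refine ⟨{q : X | IsUnit (1 + (2 * p.1 - 1) * (q.1 - p.1))}, ?_, by simp, ?_⟩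
    · have hc : Continuous fun q : X => 1 + (2 * p.1 - 1) * (q.1 - p.1) := by
        have hv : Continuous fun q : X => q.1 := continuous_subtype_val
        exact continuous_const.add (continuous_const.mul (hv.sub continuous_const))
      exact (isOpen_units_matrix n).preimage hc
    · rintro q ⟨z, hz⟩
      have hp := p.2
      have hq := q.2
      have key : p.1 * (z : Matrix (Fin n) (Fin n) A) = z * q.1 := by
        have e : (z : Matrix (Fin n) (Fin n) A) = 1 - p.1 - q.1 + 2 * (p.1 * q.1) := by
          rw [hz]
          have : (1 + (2 * p.1 - 1) * (q.1 - p.1)) =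
            1 + 2 * (p.1 * q.1) - 2 * (p.1 * p.1) - q.1 + p.1 := by noncomm_ring
          rw [this, hp]; noncomm_ring
        have e1 : p.1 * (1 - p.1 - q.1 + 2 * (p.1 * q.1)) =
            p.1 - p.1 * p.1 - p.1 * q.1 + 2 * ((p.1 * p.1) * q.1) := by noncomm_ring
        have e2 : (1 - p.1 - q.1 + 2 * (p.1 * q.1)) * q.1 =
            q.1 - p.1 * q.1 - q.1 * q.1 + 2 * (p.1 * (q.1 * q.1)) := by noncomm_ring
        rw [e, e1, e2, hp, hq]; noncomm_ring
      have h2 : q.1 = (↑z⁻¹ : Matrix (Fin n) (Fin n) A) * (p.1 * z) := by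
        rw [key, Units.inv_mul_cancel_left]
      have h3 := trace_cyclic_aux τ hτ (↑z⁻¹ : Matrix (Fin n) (Fin n) A) (p.1 * z)
      rw [← h2, Units.mul_inv_cancel_right] at h3
      exact h3
  have : (Set.range T).Countable := by
    let : TopologicalSpace ℂ := ⊥
    have : DiscreteTopology ℂ := ⟨rfl⟩
    have hc : Continuous T := hloc.continuous
    obtain ⟨c, hcc, hcd⟩ := TopologicalSpace.isSeparable_range hc
    rw [closure_discrete] at hcd
    exact hcc.mono hcd
  exact this

end Helpers

/-- the fundamental group of a separable unital simple C*-algebra with a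
unique tracial state is countable. -/
theorem fundamentalGroup_countable
    (A : Type*) [CStarAlgebra A] [TopologicalSpace.SeparableSpace A]
    (hA : IsSimpleCStarAlgebra A)
    (τ : A →ₗ[ℂ] ℂ) (hτ : IsTracialState A τ)
    (huniq : ∀ σ : A →ₗ[ℂ] ℂ, IsTracialState A σ → σ = τ) :
    (fundamentalGroup A τ).Countable := by
  have h := Set.countable_iUnion fun n => idem_traces_countable τ hτ n
  refine (h.preimage Complex.ofReal_injective).mono ?_
  rintro t ⟨n, p, -, hp, -, -, ht⟩
  exact Set.mem_iUnion.2 ⟨n, ⟨p, hp⟩, ht⟩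
end

section
/- Let E be an additive subgroup of ℝ containing ℤ, let G = IM_+(E), and let R_E be the set of all finite ℤ-linear combinations of elements of G (equivalently, the subring of ℝ generated by G). Then R_E is a unital subring of ℝ contained in E, and IM_+(E) equals the group of positive invertible elements of the ring R_E, i.e. IM_+(E) = {t ∈ ℝ : t > 0, t ∈ R_E, t⁻¹ ∈ R_E}. -/
/-- The positive inner multiplier group of an additive subgroup `E` of `ℝ`:
`IM₊(E) = {t > 0 | t ∈ E, t⁻¹ ∈ E, tE = E}`. -/
def IMplus (E : AddSubgroup ℝ) : Set ℝ :=
  {t : ℝ | 0 < t ∧ t ∈ E ∧ t⁻¹ ∈ E ∧ (fun x => t * x) '' (E : Set ℝ) = (E : Set ℝ)}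

theorem mem_IMplus_iff_aux (E : AddSubgroup ℝ) (h1 : (1 : ℝ) ∈ E) (t : ℝ) :
    t ∈ IMplus E ↔ 0 < t ∧ (∀ x ∈ E, t * x ∈ E) ∧ (∀ x ∈ E, t⁻¹ * x ∈ E) := by
  constructor
  · rintro ⟨h0, -, -, h⟩
    refine ⟨h0, fun x hx => ?_, fun x hx => ?_⟩
    · have : t * x ∈ (E : Set ℝ) := by
        rw [← h]
        exact ⟨x, hx, rfl⟩
      exact this
    · have hx' : x ∈ (E : Set ℝ) := hx
      rw [← h] at hx'
      obtain ⟨y, hy, rfl⟩ := hx'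
      have : t⁻¹ * (t * y) = y := inv_mul_cancel_left₀ h0.ne' y
      simpa only [this, SetLike.mem_coe] using hy
  · rintro ⟨h0, ha, hb⟩
    refine ⟨h0, by simpa using ha 1 h1, by simpa using hb 1 h1, ?_⟩
    ext x
    constructor
    · rintro ⟨y, hy, rfl⟩
      exact ha y hy
    · intro hx
      exact ⟨t⁻¹ * x, hb x hx, mul_inv_cancel_left₀ h0.ne' x⟩

/-- for an additive subgroup `E` of `ℝ` containing `ℤ`, the additive
subgroup `R_E` generated by `G = IM₊(E)` (the set of finite `ℤ`-linear combinations of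
elements of `G`) is a unital subring of `ℝ` contained in `E`, and `IM₊(E)` equals the
group of positive invertible elements of `R_E`. -/
theorem IMplus_eq_posUnits_of_subring
    (E : AddSubgroup ℝ) (hE : ∀ n : ℤ, (n : ℝ) ∈ E) :
    (1 : ℝ) ∈ AddSubgroup.closure (IMplus E) ∧
    (∀ x ∈ AddSubgroup.closure (IMplus E), ∀ y ∈ AddSubgroup.closure (IMplus E),
      x * y ∈ AddSubgroup.closure (IMplus E)) ∧
    (∀ x ∈ AddSubgroup.closure (IMplus E), x ∈ E) ∧
    IMplus E = {t : ℝ | 0 < t ∧ t ∈ AddSubgroup.closure (IMplus E) ∧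
      t⁻¹ ∈ AddSubgroup.closure (IMplus E)} := by
  have h1 : (1 : ℝ) ∈ E := by simpa using hE 1
  have key := mem_IMplus_iff_aux E h1
  have hmul : ∀ x ∈ AddSubgroup.closure (IMplus E), ∀ y ∈ E, x * y ∈ E := by
    intro x hx y hy
    induction hx using AddSubgroup.closure_induction with
    | mem x hx => exact ((key x).1 hx).2.1 y hy
    | zero => simp
    | add a b _ _ ha hb => rw [add_mul]; exact E.add_mem ha hb
    | neg a _ ha => rw [neg_mul]; exact E.neg_mem ha
  have hG : ∀ x ∈ IMplus E, ∀ y ∈ IMplus E, x * y ∈ IMplus E := by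
    intro x hx y hy
    rw [key] at *
    refine ⟨mul_pos hx.1 hy.1, fun z hz => ?_, fun z hz => ?_⟩
    · rw [mul_assoc]
      exact hx.2.1 _ (hy.2.1 z hz)
    · rw [mul_inv, mul_assoc]
      exact hx.2.2 _ (hy.2.2 z hz)
  refine ⟨AddSubgroup.subset_closure ((key 1).2 ?_), ?_, ?_, ?_⟩
  · simp
  · intro x hx y hy
    induction hx using AddSubgroup.closure_induction with
    | mem x hx =>
      induction hy using AddSubgroup.closure_induction with
      | mem y hy => exact AddSubgroup.subset_closure (hG x hx y hy)
      | zero => simp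
      | add a b _ _ ha hb => rw [mul_add]; exact AddSubgroup.add_mem _ ha hb
      | neg a _ ha => rw [mul_neg]; exact AddSubgroup.neg_mem _ ha
    | zero => simp
    | add a b _ _ ha hb => rw [add_mul]; exact AddSubgroup.add_mem _ ha hb
    | neg a _ ha => rw [neg_mul]; exact AddSubgroup.neg_mem _ ha
  · intro x hx
    simpa using hmul x hx 1 h1
  · ext t
    constructor
    · intro ht
      have h := (key t).1 ht
      refine ⟨h.1, AddSubgroup.subset_closure ht, AddSubgroup.subset_closure ((key _).2 ?_)⟩
      exact ⟨inv_pos.2 h.1, h.2.2, by simpa using h.2.1⟩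
    · rintro ⟨h0, ha, hb⟩
      exact (key t).2 ⟨h0, hmul t ha, hmul _ hb⟩
end

section
/- Let A be a unital simple C*-algebra with a unique tracial state τ, and let E_A be the additive subgroup of ℝ generated by the set {(τ⊗Tr)(p) : p a projection in M_n(A) for some n ≥ 1} (this subgroup is the image τ_*(K_0(A)) of K-theory under the trace and contains ℤ). Then F(A) ⊆ IM_+(E_A); in particular, λ·E_A = E_A for every λ ∈ F(A) and F(A) ⊆ E_A ∩ E_A^{-1} ∩ ℝ_{>0}. -/
open scoped Matrix ComplexOrder

/-- The set of trace values `(τ ⊗ Tr)(p)` of projections `p ∈ Mₙ(A)`, `n ≥ 1`;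
the additive subgroup of `ℝ` it generates is `τ_*(K₀(A))`. -/
def projectionTraces (A : Type*) [CStarAlgebra A] (τ : A →ₗ[ℂ] ℂ) : Set ℝ :=
  {t : ℝ | ∃ (n : ℕ) (p : Matrix (Fin n) (Fin n) A), 0 < n ∧
    p * p = p ∧ star p = p ∧ (∑ i, τ (p i i)) = (t : ℂ)}

section Helpers

variable {A : Type*} [CStarAlgebra A]

lemma aux_ideal (hA : IsSimpleCStarAlgebra A) (I : TwoSidedIdeal A) : I = ⊥ ∨ 1 ∈ I := by
  let J : TwoSidedIdeal A := TwoSidedIdeal.mk' (closure (I : Set A))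
    (subset_closure I.zero_mem)
    (fun {x y} hx hy => map_mem_closure₂ continuous_add hx hy (fun a ha b hb => I.add_mem ha hb))
    (fun {x} hx => map_mem_closure continuous_neg hx (fun a ha => I.neg_mem ha))
    (fun {x y} hy => map_mem_closure (continuous_const_mul x) hy
      (fun a ha => I.mul_mem_left x a ha))
    (fun {x y} hx => map_mem_closure (f := fun z => z * y) (continuous_mul_const y) hx
      (fun a ha => I.mul_mem_right a y ha))
  have hJ : (J : Set A) = closure (I : Set A) := TwoSidedIdeal.coe_mk' _ _ _ _ _ _
  rcases hA J (by rw [hJ]; exact isClosed_closure) with h | h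
  · left
    rw [eq_bot_iff]
    intro x hx
    rw [← h]
    change x ∈ (J : Set A)
    rw [hJ]
    exact subset_closure hx
  · right
    have h1 : (1 : A) ∈ closure (I : Set A) := by
      rw [← hJ, h]
      exact TwoSidedIdeal.mem_top _
    obtain ⟨y, hy1, hy2⟩ := mem_closure_iff.1 h1 {x : A | IsUnit x} Units.isOpen isUnit_one
    obtain ⟨u, rfl⟩ := hy1
    have := I.mul_mem_left (↑u⁻¹) (u : A) hy2
    simpa using this

open scoped Pointwise in
lemma aux_sum (hA : IsSimpleCStarAlgebra A) (x : A) (hx : x ≠ 0) :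
    ∃ (k : ℕ) (a b : Fin k → A), ∑ l, a l * x * b l = 1 := by
  have h1 : (1 : A) ∈ TwoSidedIdeal.span {x} := by
    rcases aux_ideal hA (TwoSidedIdeal.span {x}) with h | h
    · exfalso
      have : x ∈ TwoSidedIdeal.span {x} := TwoSidedIdeal.subset_span (by simp)
      rw [h, TwoSidedIdeal.mem_bot] at this
      exact hx this
    · exact h
  rw [TwoSidedIdeal.mem_span_iff_mem_addSubgroup_closure] at h1
  have key : ∀ z : A, z ∈ AddSubgroup.closure (Set.univ * {x} * Set.univ : Set A) →
      ∃ L : List (A × A), (L.map (fun c => c.1 * x * c.2)).sum = z := by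
    intro z hz
    induction hz using AddSubgroup.closure_induction with
    | mem z hz =>
      obtain ⟨y, ⟨a, -, x', hx', rfl⟩, b, -, rfl⟩ := hz
      rw [Set.mem_singleton_iff] at hx'
      subst hx'
      exact ⟨[(a, b)], by simp⟩
    | zero => exact ⟨[], by simp⟩
    | add y z _ _ hy hz =>
      obtain ⟨L, rfl⟩ := hy
      obtain ⟨M, rfl⟩ := hz
      exact ⟨L ++ M, by simp⟩
    | neg y hy' hy =>
      obtain ⟨L, rfl⟩ := hy
      clear hy'
      refine ⟨L.map (fun c => (-c.1, c.2)), ?_⟩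
      induction L with
      | nil => simp
      | cons c L ih => simp at ih ⊢; rw [ih]; abel
  obtain ⟨L, hL⟩ := key 1 h1
  refine ⟨L.length, fun l => (L.get l).1, fun l => (L.get l).2, ?_⟩
  rw [← hL, ← Fin.sum_univ_fun_getElem]
  rfl

lemma aux_normalize {ι : Type*} [Fintype ι] (u w : ι → A) (h : ∑ i, star (w i) * u i = 1) :
    ∃ d : A, star d * (∑ i, star (u i) * u i) * d = 1 := by
  let _ := CStarAlgebra.spectralOrder A
  have _ := CStarAlgebra.spectralOrderedRing A
  set U := ∑ i, star (u i) * u i with hU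
  set W := ∑ i, star (w i) * w i with hW
  have h' : ∑ i, star (u i) * w i = 1 := by
    have := congrArg star h
    simpa [star_sum] using this
  have hW0 : 0 ≤ W := Finset.sum_nonneg fun i _ => star_mul_self_nonneg _
  have hWn : W ≤ algebraMap ℝ A ‖W‖ := IsSelfAdjoint.le_algebraMap_norm_self (.of_nonneg hW0)
  set c : ℝ := ‖W‖ + 1 with hc
  have hcpos : 0 < c := by positivity
  have h0 : 0 ≤ ∑ i, star (c • u i - w i) * (c • u i - w i) :=
    Finset.sum_nonneg fun i _ => star_mul_self_nonneg _
  have h2 : ∑ i, star (c • u i - w i) * (c • u i - w i) = (c * c) • U - (2 * c) • (1 : A) + W := by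
    have : ∀ i, star (c • u i - w i) * (c • u i - w i) =
        (c * c) • (star (u i) * u i) - c • (star (u i) * w i) - c • (star (w i) * u i)
          + star (w i) * w i := by
      intro i
      simp only [star_sub, star_smul, star_trivial, sub_mul, mul_sub, smul_mul_assoc,
        mul_smul_comm]
      module
    simp only [this, Finset.sum_add_distrib, Finset.sum_sub_distrib, ← Finset.smul_sum, h, h']
    rw [← hU, ← hW]
    module
  rw [h2] at h0
  have h3 : algebraMap ℝ A 1 ≤ (c * c) • U := by
    have e : (c * c) • U - algebraMap ℝ A 1 =
       ((c * c) • U - (2 * c) • (1 : A) + W) + (algebraMap ℝ A ‖W‖ - W)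
         + algebraMap ℝ A c := by
      simp only [Algebra.algebraMap_eq_smul_one]
      rw [show ‖W‖ = c - 1 by rw [hc]; ring]
      module
    rw [← sub_nonneg, e]
    have : 0 ≤ algebraMap ℝ A c := by
      rw [Algebra.algebraMap_eq_smul_one]
      exact smul_nonneg hcpos.le zero_le_one
    exact add_nonneg (add_nonneg h0 (sub_nonneg.2 hWn)) this
  have h4 : IsUnit ((c * c) • U) := CStarAlgebra.isUnit_of_le 1 (by simpa using h3)
  have hU0 : 0 ≤ U := Finset.sum_nonneg fun i _ => star_mul_self_nonneg _
  have h5 : IsStrictlyPositive ((c * c) • U) :=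
    h4.isStrictlyPositive (smul_nonneg (by positivity) hU0)
  have h6 := CFC.conjugate_rpow_neg_one_half _ h5
  set e := ((c * c) • U) ^ (-(1/2) : ℝ) with he
  have hes : star e = e := (IsSelfAdjoint.of_nonneg CFC.rpow_nonneg).star_eq
  refine ⟨c • e, ?_⟩
  rw [star_smul, hes, star_trivial, ← h6]
  simp only [smul_mul_assoc, mul_smul_comm, smul_smul]

lemma aux_isometry (hA : IsSimpleCStarAlgebra A) {n : ℕ} (p : Matrix (Fin n) (Fin n) A)
    (hp : p * p = p) (hps : star p = p) (hp0 : p ≠ 0) :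
    ∃ (k : ℕ) (v : Fin k → Fin n → A), (∀ l c, ∑ b, p c b * v l b = v l c) ∧
      ∑ l, ∑ c, star (v l c) * v l c = 1 := by
  obtain ⟨i, j, hij⟩ : ∃ i j, p i j ≠ 0 := by
    by_contra! hcon
    exact hp0 (by ext i j; exact hcon i j)
  obtain ⟨k, a, b, hab⟩ := aux_sum hA (p i j) hij
  have hpp : ∀ c d, ∑ e, p c e * p e d = p c d := fun c d => by
    rw [← Matrix.mul_apply, hp]
  have hst : ∀ c d, star (p c d) = p d c := fun c d => by
    conv_rhs => rw [← hps]
    rfl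
  obtain ⟨d, hd⟩ := aux_normalize (ι := Fin k × Fin n) (fun x => p x.2 j * b x.1)
    (fun x => p x.2 i * star (a x.1)) (by
      rw [Fintype.sum_prod_type, ← hab]
      refine Finset.sum_congr rfl fun l _ => ?_
      rw [← hpp i j, Finset.mul_sum, Finset.sum_mul]
      refine Finset.sum_congr rfl fun c _ => ?_
      simp only [star_mul, star_star, hst, mul_assoc])
  refine ⟨k, fun l c => p c j * b l * d, ?_, ?_⟩
  · intro l c
    beta_reduce
    rw [← hpp c j, Finset.sum_mul, Finset.sum_mul]
    simp only [mul_assoc]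
  · rw [← hd, Fintype.sum_prod_type, Finset.mul_sum, Finset.sum_mul]
    refine Finset.sum_congr rfl fun l _ => ?_
    rw [Finset.mul_sum, Finset.sum_mul]
    refine Finset.sum_congr rfl fun c _ => ?_
    simp only [star_mul, mul_assoc]

/-- the diagonal of a projection has nonnegative trace -/
lemma aux_nonneg {τ : A →ₗ[ℂ] ℂ} (hτ : IsTracialState A τ) {ι : Type*} [Fintype ι]
    (x : Matrix ι ι A) : 0 ≤ ∑ i, τ ((star x * x) i i) := by
  refine Finset.sum_nonneg fun i _ => ?_
  rw [Matrix.mul_apply, map_sum]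
  exact Finset.sum_nonneg fun j _ => hτ.nonneg _

lemma aux_mem (τ : A →ₗ[ℂ] ℂ) {ι : Type*} [Fintype ι] (q : Matrix ι ι A)
    (hq : q * q = q) (hqs : star q = q) (t : ℝ) (ht : ∑ i, τ (q i i) = (t : ℂ)) :
    t ∈ AddSubgroup.closure (projectionTraces A τ) := by
  classical
  rcases isEmpty_or_nonempty ι with h | h
  · have : t = 0 := by simpa using ht.symm
    rw [this]; exact zero_mem _
  · refine AddSubgroup.subset_closure ⟨Fintype.card ι,
      q.submatrix (Fintype.equivFin ι).symm (Fintype.equivFin ι).symm, Fintype.card_pos, ?_, ?_, ?_⟩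
    · rw [Matrix.submatrix_mul_equiv, hq]
    · rw [Matrix.star_eq_conjTranspose, Matrix.conjTranspose_submatrix,
        ← Matrix.star_eq_conjTranspose, hqs]
    · rw [← ht]
      exact Equiv.sum_comp (Fintype.equivFin ι).symm (fun i => τ (q i i))

lemma aux_nonneg' {τ : A →ₗ[ℂ] ℂ} (hτ : IsTracialState A τ) {ι : Type*} [Fintype ι]
    (q : Matrix ι ι A) (hq : q * q = q) (hqs : star q = q) :
    ∃ t : ℝ, 0 ≤ t ∧ ∑ i, τ (q i i) = (t : ℂ) := by
  have h := aux_nonneg hτ q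
  rw [hqs, hq] at h
  obtain ⟨h1, h2⟩ := Complex.le_def.1 h
  exact ⟨_, h1, Complex.ext (by simp) (by simpa using h2.symm)⟩

lemma aux_trace {τ : A →ₗ[ℂ] ℂ} (hτ : IsTracialState A τ)
    (huniq : ∀ σ : A →ₗ[ℂ] ℂ, IsTracialState A σ → σ = τ)
    {n : ℕ} {p : Matrix (Fin n) (Fin n) A} (hp : p * p = p)
    {φ : A → Matrix (Fin n) (Fin n) A} (hφ : IsCornerIso A p φ) {t : ℝ} (ht0 : 0 ≤ t)
    (ht : ∑ i, τ (p i i) = (t : ℂ)) (a : A) : ∑ i, τ (φ a i i) = t * τ a := by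
  obtain ⟨hinj, hadd, hmul, hsmul, hstar, hrange⟩ := hφ
  have hone : φ 1 = p := by
    obtain ⟨e, he⟩ : p ∈ Set.range φ := by rw [hrange]; simp [hp]
    have h1 : φ 1 ∈ Set.range φ := ⟨1, rfl⟩
    rw [hrange] at h1
    have h2 : p * φ 1 = p := by rw [← he, ← hmul, mul_one]
    have h3 : φ 1 * p = p := by rw [← he, ← hmul, one_mul]
    have h4 : p * φ 1 * p = φ 1 := h1
    rw [h2, hp] at h4
    exact h4.symm
  let σ : A →ₗ[ℂ] ℂ :=
    { toFun := fun a => ∑ i, τ (φ a i i)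
      map_add' := fun a b => by simp [hadd, Finset.sum_add_distrib]
      map_smul' := fun c a => by simp [hsmul, Finset.mul_sum] }
  have hσ : ∀ a, σ a = ∑ i, τ (φ a i i) := fun a => rfl
  have ht1 : (1 + (t : ℂ)) ≠ 0 := by
    have : (0:ℝ) < 1 + t := by linarith
    exact_mod_cast this.ne'
  have hst : IsTracialState A ((1 + (t : ℂ))⁻¹ • (τ + σ)) := by
    refine ⟨?_, ?_, ?_⟩
    · simp only [LinearMap.smul_apply, LinearMap.add_apply, hσ, hone, ht, hτ.map_one, smul_eq_mul]
      exact inv_mul_cancel₀ ht1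
    · intro a
      simp only [LinearMap.smul_apply, LinearMap.add_apply, hσ, smul_eq_mul]
      refine mul_nonneg ?_ (add_nonneg (hτ.nonneg a) ?_)
      · have : (0:ℝ) ≤ (1 + t)⁻¹ := by positivity
        exact_mod_cast this
      · rw [hmul, hstar]
        exact aux_nonneg hτ _
    · intro a b
      simp only [LinearMap.smul_apply, LinearMap.add_apply, hσ, hτ.tracial a b]
      congr 2
      rw [hmul, hmul]
      simp only [Matrix.mul_apply, map_sum]
      rw [Finset.sum_comm]
      refine Finset.sum_congr rfl fun i _ => Finset.sum_congr rfl fun j _ => hτ.tracial _ _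
  have h := congrArg (fun f : A →ₗ[ℂ] ℂ => f a) (huniq _ hst)
  simp only [LinearMap.smul_apply, LinearMap.add_apply, smul_eq_mul] at h
  rw [inv_mul_eq_iff_eq_mul₀ ht1] at h
  rw [← hσ]
  linear_combination h

/-- multiplication by `t` -/
lemma aux_amp (τ : A →ₗ[ℂ] ℂ)
    {n : ℕ} {p : Matrix (Fin n) (Fin n) A}
    {φ : A → Matrix (Fin n) (Fin n) A} (hφ : IsCornerIso A p φ) {t : ℝ}
    (htr : ∀ a, ∑ i, τ (φ a i i) = t * τ a)
    {m : ℕ} (q : Matrix (Fin m) (Fin m) A) (hq : q * q = q) (hqs : star q = q) (s : ℝ)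
    (hs : ∑ i, τ (q i i) = (s : ℂ)) :
    t * s ∈ AddSubgroup.closure (projectionTraces A τ) := by
  obtain ⟨hinj, hadd, hmul, hsmul, hstar, hrange⟩ := hφ
  let Φ : A →+ Matrix (Fin n) (Fin n) A := AddMonoidHom.mk' φ hadd
  have hΦ : ∀ a, φ a = Φ a := fun _ => rfl
  refine aux_mem τ (ι := Fin m × Fin n) (Matrix.of fun x y => φ (q x.1 y.1) x.2 y.2) ?_ ?_ _ ?_
  · ext ⟨i, a⟩ ⟨j, b⟩
    simp only [Matrix.mul_apply, Matrix.of_apply, Fintype.sum_prod_type]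
    conv_rhs => rw [← hq, Matrix.mul_apply, hΦ, map_sum, Matrix.sum_apply]
    refine Finset.sum_congr rfl fun k _ => ?_
    rw [← hΦ, hmul, Matrix.mul_apply]
  · ext ⟨i, a⟩ ⟨j, b⟩
    conv_rhs => rw [Matrix.of_apply, ← hqs, Matrix.star_apply, hstar, Matrix.star_apply]
    simp only [Matrix.star_apply, Matrix.of_apply]
  · simp only [Matrix.of_apply, Fintype.sum_prod_type, htr]
    rw [← Finset.mul_sum, hs]
    push_cast
    rfl

/-- division by `t` -/
lemma aux_compress {τ : A →ₗ[ℂ] ℂ} (hτ : IsTracialState A τ)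
    {n : ℕ} {p : Matrix (Fin n) (Fin n) A} (hps : star p = p)
    {φ : A → Matrix (Fin n) (Fin n) A} (hφ : IsCornerIso A p φ) {t : ℝ}
    (htr : ∀ a, ∑ i, τ (φ a i i) = t * τ a)
    {k : ℕ} (v : Fin k → Fin n → A) (hv : ∀ l c, ∑ b, p c b * v l b = v l c)
    (hvv : ∑ l, ∑ c, star (v l c) * v l c = 1)
    {m : ℕ} (q : Matrix (Fin m) (Fin m) A) (hq : q * q = q) (hqs : star q = q) (s : ℝ)
    (hs : ∑ i, τ (q i i) = (s : ℂ)) :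
    ∃ r ∈ AddSubgroup.closure (projectionTraces A τ), t * r = s := by
  obtain ⟨hinj, hadd, hmul, hsmul, hstar, hrange⟩ := hφ
  let Φ : A →+ Matrix (Fin n) (Fin n) A := AddMonoidHom.mk' φ hadd
  have hΦ : ∀ a, φ a = Φ a := fun _ => rfl
  have hst : ∀ c d, star (p c d) = p d c := fun c d => by
    conv_rhs => rw [← hps]
    rfl
  have hv' : ∀ l c, ∑ b, star (v l b) * p b c = star (v l c) := by
    intro l c
    rw [← hv l c, star_sum]
    simp only [star_mul, hst]
  let S : (Fin m × Fin k) → (Fin m × Fin k) → Matrix (Fin n) (Fin n) A :=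
    fun x y => Matrix.of fun a b => v x.2 a * q x.1 y.1 * star (v y.2 b)
  have hS : ∀ x y, ∃ r, φ r = S x y := by
    intro x y
    have : S x y ∈ Set.range φ := by
      rw [hrange]
      change p * S x y * p = S x y
      have h1 : p * S x y = S x y := by
        ext a b
        simp only [Matrix.mul_apply, S, Matrix.of_apply, ← mul_assoc, ← Finset.sum_mul, hv]
      rw [h1]
      ext a b
      simp only [Matrix.mul_apply, S, Matrix.of_apply, mul_assoc, ← Finset.mul_sum, hv']
    exact this
  choose R hR using hS
  have hRR : (Matrix.of R) * (Matrix.of R) = Matrix.of R := by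
    ext x y
    apply hinj
    rw [Matrix.mul_apply, hΦ, map_sum]
    simp only [← hΦ, Matrix.of_apply, hmul, hR]
    ext a b
    rw [Matrix.sum_apply, Fintype.sum_prod_type]
    simp only [S, Matrix.mul_apply, Matrix.of_apply]
    have hqq : q x.1 y.1 = ∑ j, q x.1 j * q j y.1 := by rw [← Matrix.mul_apply, hq]
    rw [hqq, Finset.mul_sum, Finset.sum_mul]
    refine Finset.sum_congr rfl fun j _ => ?_
    have : v x.2 a * (q x.1 j * q j y.1) * star (v y.2 b) =
        v x.2 a * q x.1 j * (∑ l, ∑ c, star (v l c) * v l c) * (q j y.1 * star (v y.2 b)) := by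
      rw [hvv]; simp only [mul_one, mul_assoc]
    rw [this]
    simp only [Finset.mul_sum, Finset.sum_mul, mul_assoc]
  have hRs : star (Matrix.of R) = Matrix.of R := by
    ext x y
    apply hinj
    rw [Matrix.star_apply, hstar]
    simp only [Matrix.of_apply, hR]
    ext a b
    have : star (q y.1 x.1) = q x.1 y.1 := by
      conv_rhs => rw [← hqs]
      rfl
    simp only [Matrix.star_apply, S, Matrix.of_apply, star_mul, star_star, this, mul_assoc]
  obtain ⟨r, -, hr⟩ := aux_nonneg' hτ _ hRR hRs
  refine ⟨r, aux_mem τ _ hRR hRs r hr, ?_⟩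
  have : (t : ℂ) * r = s := by
    rw [← hr, ← hs, Finset.mul_sum, Fintype.sum_prod_type]
    simp only [Matrix.of_apply, ← htr, hR]
    refine Finset.sum_congr rfl fun i _ => ?_
    simp only [S, Matrix.of_apply]
    conv_rhs => rw [← one_mul (q i i), ← hvv, Finset.sum_mul, map_sum]
    refine Finset.sum_congr rfl fun l _ => ?_
    rw [Finset.sum_mul, map_sum]
    refine Finset.sum_congr rfl fun c _ => ?_
    rw [hτ.tracial, mul_assoc]
  exact_mod_cast this

lemma aux_main (hA : IsSimpleCStarAlgebra A)
    (τ : A →ₗ[ℂ] ℂ) (hτ : IsTracialState A τ)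
    (huniq : ∀ σ : A →ₗ[ℂ] ℂ, IsTracialState A σ → σ = τ) :
    fundamentalGroup A τ ⊆ IMplus (AddSubgroup.closure (projectionTraces A τ)) := by
  rintro t ⟨n, p, hn, hp, hps, ⟨φ, hφ⟩, ht⟩
  have ht0 : 0 ≤ t := by
    obtain ⟨t', h0, h1⟩ := aux_nonneg' hτ p hp hps
    rw [ht] at h1
    have : t = t' := by exact_mod_cast h1
    rwa [this]
  have htr := aux_trace hτ huniq hp hφ ht0 ht
  have hp0 : p ≠ 0 := by
    rintro rfl
    have h0 : φ 1 = φ 0 := by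
      have h1 : φ 1 ∈ Set.range φ := ⟨1, rfl⟩
      have h2 : φ 0 ∈ Set.range φ := ⟨0, rfl⟩
      rw [hφ.2.2.2.2.2] at h1 h2
      simp only [Set.mem_ofPred_eq, zero_mul] at h1 h2
      rw [← h1, ← h2]
    have h1 : (1 : A) = 0 := hφ.1 h0
    have := hτ.map_one
    rw [h1, map_zero] at this
    exact zero_ne_one this
  obtain ⟨k, v, hv, hvv⟩ := aux_isometry hA p hp hps hp0
  set E := AddSubgroup.closure (projectionTraces A τ) with hE
  have hup : ∀ x ∈ E, t * x ∈ E := by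
    intro x hx
    induction hx using AddSubgroup.closure_induction with
    | mem x hx =>
      obtain ⟨m, q, -, hq, hqs, hs⟩ := hx
      exact aux_amp τ hφ htr q hq hqs x hs
    | zero => rw [mul_zero]; exact zero_mem _
    | add y z _ _ hy hz => rw [mul_add]; exact add_mem hy hz
    | neg y _ hy => rw [mul_neg]; exact neg_mem hy
  have hdown : ∀ x ∈ E, ∃ r ∈ E, t * r = x := by
    intro x hx
    induction hx using AddSubgroup.closure_induction with
    | mem x hx =>
      obtain ⟨m, q, -, hq, hqs, hs⟩ := hx
      exact aux_compress hτ hps hφ htr v hv hvv q hq hqs x hs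
    | zero => exact ⟨0, zero_mem _, mul_zero _⟩
    | add y z _ _ hy hz =>
      obtain ⟨r, hr, rfl⟩ := hy
      obtain ⟨r', hr', rfl⟩ := hz
      exact ⟨r + r', add_mem hr hr', mul_add _ _ _⟩
    | neg y _ hy =>
      obtain ⟨r, hr, rfl⟩ := hy
      exact ⟨-r, neg_mem hr, mul_neg _ _⟩
  have h1E : (1 : ℝ) ∈ E := aux_mem τ (1 : Matrix (Fin 1) (Fin 1) A) (one_mul _) (star_one _) 1
    (by simp [hτ.map_one])
  obtain ⟨r, hrE, hr⟩ := hdown 1 h1E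
  have htne : t ≠ 0 := by
    rintro rfl
    simp at hr
  refine ⟨lt_of_le_of_ne ht0 htne.symm, aux_mem τ p hp hps t ht, ?_, ?_⟩
  · rwa [← eq_inv_of_mul_eq_one_right hr]
  · ext x
    constructor
    · rintro ⟨y, hy, rfl⟩
      exact hup y hy
    · exact fun hx => hdown x hx

end Helpers

/-- `F(A) ⊆ IM₊(E_A)`, where `E_A` is the additive subgroup of `ℝ`
generated by the traces of projections (i.e. `τ_*(K₀(A))`).  In particular every
`λ ∈ F(A)` satisfies `λ ∈ E_A`, `λ⁻¹ ∈ E_A`, `λ > 0` and `λ • E_A = E_A`. -/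
theorem fundamentalGroup_subset_IMplus
    (A : Type*) [CStarAlgebra A]
    (hA : IsSimpleCStarAlgebra A)
    (τ : A →ₗ[ℂ] ℂ) (hτ : IsTracialState A τ)
    (huniq : ∀ σ : A →ₗ[ℂ] ℂ, IsTracialState A σ → σ = τ) :
    fundamentalGroup A τ ⊆ IMplus (AddSubgroup.closure (projectionTraces A τ)) ∧
    (∀ l ∈ fundamentalGroup A τ,
      (fun x => l * x) '' (AddSubgroup.closure (projectionTraces A τ) : Set ℝ) =
        (AddSubgroup.closure (projectionTraces A τ) : Set ℝ)) ∧
    (∀ l ∈ fundamentalGroup A τ, 0 < l ∧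
      l ∈ AddSubgroup.closure (projectionTraces A τ) ∧
      l⁻¹ ∈ AddSubgroup.closure (projectionTraces A τ)) := by
  have h := aux_main hA τ hτ huniq
  exact ⟨h, fun l hl => (h hl).2.2.2, fun l hl => ⟨(h hl).1, (h hl).2.1, (h hl).2.2.1⟩⟩
end
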